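/- Let d₁, N be positive integers, L ≥ 0 and R > 0, and let h : ℝ^{d₁} → ℝ be any function of the form h(y) = ∑_{i=1}^{(N+1)^{d₁}} c_i ψ( (N/(2R)) (y − b_i) ) with |c_i| ≤ L, b_i ∈ ℝ^{d₁}, where ψ(y) = σ(min{ min_{k≠j}(1 + y_k − y_j), min_k(1 + y_k), min_k(1 − y_k) }) and σ(u) = max{u,0}. Let μ be a finite measure, let φ_1,…,φ_{d₁} be an orthonormal family in L²(μ), and let T(g) = (⟨g, φ_1⟩_{L²(μ)}, …, ⟨g, φ_{d₁}⟩_{L²(μ)}). Then for all u, v ∈ L²(μ), |h(T(u)) − h(T(v))| ≤ (L/R) · N (N+1)^{d₁} (d₁³ + d₁²) ‖u − v‖_{L²(μ)}. -/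

import Mathlib

open MeasureTheory
open scoped RealInnerProductSpace

/-- The function `ψ(y) = σ(min{min_{k≠j}(1 + y_k − y_j), min_k(1 + y_k), min_k(1 − y_k)})`,
where `σ` is the ReLU.  (For `k = j` the value `1 + y_k` is used, which is already a member
of the second family, so the minimum is unchanged.) -/
noncomputable def psi (d : ℕ) (hd : 0 < d) (y : Fin d → ℝ) : ℝ :=
  max ((Finset.univ : Finset ((Fin d × Fin d) ⊕ (Fin d ⊕ Fin d))).inf'
    ⟨Sum.inr (Sum.inl ⟨0, hd⟩), Finset.mem_univ _⟩
    (fun p => match p with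
      | Sum.inl (k, j) => if k = j then 1 + y k else 1 + y k - y j
      | Sum.inr (Sum.inl k) => 1 + y k
      | Sum.inr (Sum.inr k) => 1 - y k)) 0

theorem psi_le_aux (d : ℕ) (hd : 0 < d) (y z : Fin d → ℝ) (M : ℝ)
    (h : ∀ k, |y k - z k| ≤ M) : psi d hd y ≤ psi d hd z + 2 * M := by
  have hM : 0 ≤ M := le_trans (abs_nonneg _) (h ⟨0, hd⟩)
  unfold psi
  apply max_le
  · refine le_trans ?_ (add_le_add_left (le_max_left _ _) _)
    rw [← sub_le_iff_le_add]
    apply Finset.le_inf'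
    intro p hp
    rw [sub_le_iff_le_add]
    refine le_trans (Finset.inf'_le _ hp) ?_
    rcases p with ⟨k, j⟩ | k | k
    · have h1 := abs_le.mp (h k)
      have h2 := abs_le.mp (h j)
      dsimp only
      split_ifs <;> linarith
    · have h1 := abs_le.mp (h k)
      dsimp only
      linarith
    · have h1 := abs_le.mp (h k)
      dsimp only
      linarith
  · have := le_max_right ((Finset.univ : Finset ((Fin d × Fin d) ⊕ (Fin d ⊕ Fin d))).inf'
      ⟨Sum.inr (Sum.inl ⟨0, hd⟩), Finset.mem_univ _⟩
      (fun p => match p with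
        | Sum.inl (k, j) => if k = j then 1 + z k else 1 + z k - z j
        | Sum.inr (Sum.inl k) => 1 + z k
        | Sum.inr (Sum.inr k) => 1 - z k)) 0
    linarith

/-- For a structured network `h(y) = ∑ᵢ cᵢ ψ((N/(2R))(y − bᵢ))` with `|cᵢ| ≤ L` and the
projection `T(g) = (⟨g,φ₁⟩,…,⟨g,φ_{d₁}⟩)` onto an orthonormal family in `L²(μ)`,
`|h(T u) − h(T v)| ≤ (L/R) N (N+1)^{d₁} (d₁³ + d₁²) ‖u − v‖_{L²(μ)}`. -/
theorem abs_network_proj_sub_le {Ω : Type*} [MeasurableSpace Ω] (μ : Measure Ω)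
    [IsFiniteMeasure μ] (d₁ N : ℕ) (hd : 0 < d₁) (hN : 0 < N)
    (L R : ℝ) (hL : 0 ≤ L) (hR : 0 < R)
    (c : Fin ((N + 1) ^ d₁) → ℝ) (hc : ∀ i, |c i| ≤ L)
    (b : Fin ((N + 1) ^ d₁) → Fin d₁ → ℝ)
    (φ : Fin d₁ → Lp ℝ 2 μ) (hφ : Orthonormal ℝ φ) (u v : Lp ℝ 2 μ) :
    |(∑ i, c i * psi d₁ hd (fun k => (N / (2 * R)) * (⟪u, φ k⟫ - b i k))) -
      (∑ i, c i * psi d₁ hd (fun k => (N / (2 * R)) * (⟪v, φ k⟫ - b i k)))| ≤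
      (L / R) * N * ((N : ℝ) + 1) ^ d₁ * ((d₁ : ℝ) ^ 3 + (d₁ : ℝ) ^ 2) * ‖u - v‖ := by
  have key : ∀ i, |c i * psi d₁ hd (fun k => (N / (2 * R)) * (⟪u, φ k⟫ - b i k)) -
      c i * psi d₁ hd (fun k => (N / (2 * R)) * (⟪v, φ k⟫ - b i k))| ≤
      L * (2 * (N / (2 * R) * ‖u - v‖)) := by
    intro i
    have hk : ∀ k, |(N / (2 * R)) * (⟪u, φ k⟫ - b i k) - (N / (2 * R)) * (⟪v, φ k⟫ - b i k)|
        ≤ N / (2 * R) * ‖u - v‖ := by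
      intro k
      have e : (N / (2 * R)) * (⟪u, φ k⟫ - b i k) - (N / (2 * R)) * (⟪v, φ k⟫ - b i k)
          = (N / (2 * R)) * ⟪u - v, φ k⟫ := by
        rw [inner_sub_left]; ring
      have h0 : (0 : ℝ) ≤ N / (2 * R) := by positivity
      rw [e, abs_mul, abs_of_nonneg h0]
      refine mul_le_mul_of_nonneg_left ?_ h0
      have := abs_real_inner_le_norm (u - v) (φ k)
      rwa [hφ.1 k, mul_one] at this
    rw [← mul_sub, abs_mul]
    refine mul_le_mul (hc i) ?_ (abs_nonneg _) hL
    have h1 := psi_le_aux d₁ hd _ _ _ hk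
    have h2 := psi_le_aux d₁ hd _ _ _ (fun k => (abs_sub_comm _ _).trans_le (hk k))
    rw [abs_le]
    constructor <;> linarith
  rw [← Finset.sum_sub_distrib]
  refine (Finset.abs_sum_le_sum_abs _ _).trans ((Finset.sum_le_sum fun i _ => key i).trans ?_)
  rw [Finset.sum_const, Finset.card_univ, Fintype.card_fin, nsmul_eq_mul]
  push_cast
  have hd1 : (1 : ℝ) ≤ d₁ := by exact_mod_cast hd
  have h3 : (1 : ℝ) ≤ (d₁ : ℝ) ^ 3 + (d₁ : ℝ) ^ 2 := by
    have := one_le_pow₀ hd1 (n := 3)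
    have := one_le_pow₀ hd1 (n := 2)
    linarith
  have hA : 0 ≤ (L / R) * N * ((N : ℝ) + 1) ^ d₁ * ‖u - v‖ := by positivity
  have e : ((N : ℝ) + 1) ^ d₁ * (L * (2 * (N / (2 * R) * ‖u - v‖))) =
      (L / R) * N * ((N : ℝ) + 1) ^ d₁ * ‖u - v‖ := by
    field_simp
  rw [e]
  have := mul_le_mul_of_nonneg_left h3 hA
  linarith
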